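/- arXiv:1209.4224 — 5 statements merged into one kernel-verified Lean document; each statement's English description precedes it below -/
import Mathlib

section
/- Assume the ax+b vessel conditions for data (ℋ, ℰ, A₁, A₂, Φ, σ₁, σ₂, γ, γ_*). Let u, y : {a ∈ ℝ : a > 0} × ℝ → ℰ and x : {a ∈ ℝ : a > 0} × ℝ → ℋ be differentiable functions satisfying, for all (a,b) with a > 0: i·a·∂x/∂a(a,b) + A₁x(a,b) = Φ*σ₁u(a,b), i·a·∂x/∂b(a,b) + A₂x(a,b) = Φ*σ₂u(a,b), and y(a,b) = u(a,b) − i·Φx(a,b). Then for all (a,b) with a > 0: i·a·∂x/∂a(a,b) + A₁*x(a,b) = Φ*σ₁y(a,b), i·a·∂x/∂b(a,b) + A₂*x(a,b) = Φ*σ₂y(a,b), and u(a,b) = y(a,b) + i·Φx(a,b). That is, (y, x, u) is a trajectory of the adjoint system. -/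
open ContinuousLinearMap

/-- The ax+b vessel conditions for data `(ℋ, ℰ, A₁, A₂, Φ, σ₁, σ₂, γ, γ_*)`: the vessel
conditions for the two-dimensional Lie algebra with basis `X₁, X₂` and `[X₁, X₂] = X₂`. -/
structure IsAxbVessel {H : Type*} [NormedAddCommGroup H] [InnerProductSpace ℂ H]
    [CompleteSpace H]
    {E : Type*} [NormedAddCommGroup E] [InnerProductSpace ℂ E] [CompleteSpace E]
    (A₁ A₂ : H →L[ℂ] H) (Φ : H →L[ℂ] E) (σ₁ σ₂ γ γs : E →L[ℂ] E) : Prop where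
  comm : A₁ ∘L A₂ - A₂ ∘L A₁ = Complex.I • A₂
  σ₁_sa : adjoint σ₁ = σ₁
  σ₂_sa : adjoint σ₂ = σ₂
  second : γ - adjoint γ = Complex.I • σ₂
  second_s : γs - adjoint γs = Complex.I • σ₂
  colligation₁ : A₁ - adjoint A₁ = Complex.I • (adjoint Φ ∘L σ₁ ∘L Φ)
  colligation₂ : A₂ - adjoint A₂ = Complex.I • (adjoint Φ ∘L σ₂ ∘L Φ)
  input : σ₁ ∘L Φ ∘L adjoint A₂ - σ₂ ∘L Φ ∘L adjoint A₁ = γ ∘L Φ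
  output : σ₁ ∘L Φ ∘L A₂ - σ₂ ∘L Φ ∘L A₁ = γs ∘L Φ
  linkage : γs - γ = Complex.I •
      (σ₁ ∘L Φ ∘L adjoint Φ ∘L σ₂ - σ₂ ∘L Φ ∘L adjoint Φ ∘L σ₁)

/-- If `(u, x, y)` is a trajectory of the system associated to an ax+b vessel
on the half-plane `{a > 0}`, then `(y, x, u)` is a trajectory of the adjoint system. -/
theorem stmt_3 {H : Type*} [NormedAddCommGroup H] [InnerProductSpace ℂ H] [CompleteSpace H]
    {E : Type*} [NormedAddCommGroup E] [InnerProductSpace ℂ E] [CompleteSpace E]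
    (A₁ A₂ : H →L[ℂ] H) (Φ : H →L[ℂ] E) (σ₁ σ₂ γ γs : E →L[ℂ] E)
    (hV : IsAxbVessel A₁ A₂ Φ σ₁ σ₂ γ γs)
    (u y : ℝ → ℝ → E) (x : ℝ → ℝ → H) (xa xb : ℝ → ℝ → H)
    (hu : DifferentiableOn ℝ (fun p : ℝ × ℝ => u p.1 p.2) {p : ℝ × ℝ | 0 < p.1})
    (hy : DifferentiableOn ℝ (fun p : ℝ × ℝ => y p.1 p.2) {p : ℝ × ℝ | 0 < p.1})
    (hxa : ∀ a b : ℝ, 0 < a → HasDerivAt (fun t => x t b) (xa a b) a)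
    (hxb : ∀ a b : ℝ, 0 < a → HasDerivAt (fun t => x a t) (xb a b) b)
    (hsys₁ : ∀ a b : ℝ, 0 < a →
      (Complex.I * (a : ℂ)) • xa a b + A₁ (x a b) = adjoint Φ (σ₁ (u a b)))
    (hsys₂ : ∀ a b : ℝ, 0 < a →
      (Complex.I * (a : ℂ)) • xb a b + A₂ (x a b) = adjoint Φ (σ₂ (u a b)))
    (hout : ∀ a b : ℝ, 0 < a → y a b = u a b - Complex.I • Φ (x a b)) :
    ∀ a b : ℝ, 0 < a →
      (Complex.I * (a : ℂ)) • xa a b + adjoint A₁ (x a b) = adjoint Φ (σ₁ (y a b)) ∧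
      (Complex.I * (a : ℂ)) • xb a b + adjoint A₂ (x a b) = adjoint Φ (σ₂ (y a b)) ∧
      u a b = y a b + Complex.I • Φ (x a b) := by
  intro a b ha
  have h₁ := congrArg (fun T : H →L[ℂ] H => T (x a b)) hV.colligation₁
  have h₂ := congrArg (fun T : H →L[ℂ] H => T (x a b)) hV.colligation₂
  simp only [sub_apply, smul_apply, comp_apply] at h₁ h₂
  refine ⟨?_, ?_, ?_⟩
  · rw [hout a b ha, map_sub, map_sub, map_smul, map_smul, ← hsys₁ a b ha, ← h₁]
    abel
  · rw [hout a b ha, map_sub, map_sub, map_smul, map_smul, ← hsys₂ a b ha, ← h₂]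
    abel
  · rw [hout a b ha, sub_add_cancel]
end

section
/- Assume the ax+b vessel conditions for data (ℋ, ℰ, A₁, A₂, Φ, σ₁, σ₂, γ, γ_*). Let u : {a ∈ ℝ : a > 0} × ℝ → ℰ be differentiable and x : {a ∈ ℝ : a > 0} × ℝ → ℋ be twice continuously differentiable, satisfying for all (a,b) with a > 0: i·a·∂x/∂a + A₁x = Φ*σ₁u and i·a·∂x/∂b + A₂x = Φ*σ₂u. Set y = u − i·Φx. Then for all (a,b) with a > 0: Φ*( a·σ₂·∂u/∂a(a,b) − a·σ₁·∂u/∂b(a,b) + i·γ·u(a,b) ) = 0 and Φ*( a·σ₂·∂y/∂a(a,b) − a·σ₁·∂y/∂b(a,b) + i·γ_*·y(a,b) ) = 0. That is, the input satisfies the non-strict input compatibility condition and the output satisfies the non-strict output compatibility condition. -/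
open ContinuousLinearMap

theorem mixed_partials {H : Type*} [NormedAddCommGroup H] [NormedSpace ℝ H]
    (x : ℝ → ℝ → H) (xa xb : ℝ → ℝ → H)
    (hx2 : ContDiffOn ℝ 2 (fun p : ℝ × ℝ => x p.1 p.2) {p : ℝ × ℝ | 0 < p.1})
    (hxa : ∀ a b : ℝ, 0 < a → HasDerivAt (fun t => x t b) (xa a b) a)
    (hxb : ∀ a b : ℝ, 0 < a → HasDerivAt (fun t => x a t) (xb a b) b)
    (a b : ℝ) (ha : 0 < a) :
    ∃ w : H, HasDerivAt (fun t => xa a t) w b ∧ HasDerivAt (fun t => xb t b) w a := by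
  set f : ℝ × ℝ → H := fun p => x p.1 p.2 with hf
  have hopen : IsOpen {p : ℝ × ℝ | 0 < p.1} := isOpen_lt continuous_const continuous_fst
  have hc : ∀ a b : ℝ, 0 < a → ContDiffAt ℝ 2 f (a, b) := fun a b ha =>
    hx2.contDiffAt (hopen.mem_nhds ha)
  have hl : ∀ a b : ℝ, HasDerivAt (fun t : ℝ => (t, b)) ((1 : ℝ), (0 : ℝ)) a := fun a b =>
    (hasDerivAt_id a).prodMk (hasDerivAt_const a b)
  have hr : ∀ a b : ℝ, HasDerivAt (fun t : ℝ => (a, t)) ((0 : ℝ), (1 : ℝ)) b := fun a b =>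
    (hasDerivAt_const b a).prodMk (hasDerivAt_id b)
  have hD : ∀ a b : ℝ, 0 < a → HasFDerivAt f (fderiv ℝ f (a, b)) (a, b) := fun a b ha =>
    ((hc a b ha).differentiableAt (by norm_num)).hasFDerivAt
  have ea : ∀ a b : ℝ, 0 < a → xa a b = fderiv ℝ f (a, b) (1, 0) := by
    intro a b ha
    have h := HasFDerivAt.comp_hasDerivAt (f := fun t : ℝ => (t, b)) a (hD a b ha) (hl a b)
    exact (hxa a b ha).unique h
  have eb : ∀ a b : ℝ, 0 < a → xb a b = fderiv ℝ f (a, b) (0, 1) := by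
    intro a b ha
    have h := HasFDerivAt.comp_hasDerivAt (f := fun t : ℝ => (a, t)) b (hD a b ha) (hr a b)
    exact (hxb a b ha).unique h
  have hDD : HasFDerivAt (fderiv ℝ f) (fderiv ℝ (fderiv ℝ f) (a, b)) (a, b) :=
    (((hc a b ha).fderiv_right (m := 1) (by norm_num)).differentiableAt (by norm_num)).hasFDerivAt
  have hsymm : IsSymmSndFDerivAt ℝ f (a, b) := (hc a b ha).isSymmSndFDerivAt (by simp)
  refine ⟨fderiv ℝ (fderiv ℝ f) (a, b) (0, 1) (1, 0), ?_, ?_⟩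
  · have h0 := HasFDerivAt.comp_hasDerivAt (f := fun t : ℝ => (a, t)) b hDD (hr a b)
    have h := (ContinuousLinearMap.apply ℝ H ((1 : ℝ), (0 : ℝ))).hasFDerivAt.comp_hasDerivAt b h0
    refine h.congr_of_eventuallyEq (Filter.Eventually.of_forall fun t => ?_)
    exact ea a t ha
  · have h0 := HasFDerivAt.comp_hasDerivAt (f := fun t : ℝ => (t, b)) a hDD (hl a b)
    have h := (ContinuousLinearMap.apply ℝ H ((0 : ℝ), (1 : ℝ))).hasFDerivAt.comp_hasDerivAt a h0
    rw [hsymm.eq (0, 1) (1, 0)]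
    refine h.congr_of_eventuallyEq ?_
    filter_upwards [lt_mem_nhds ha] with t ht using eb t b ht

/-- For any trajectory of the system of an ax+b vessel on the half-plane, the
input satisfies the non-strict input compatibility condition and the output satisfies the
non-strict output compatibility condition. -/
theorem stmt_5 {H : Type*} [NormedAddCommGroup H] [InnerProductSpace ℂ H] [CompleteSpace H]
    {E : Type*} [NormedAddCommGroup E] [InnerProductSpace ℂ E] [CompleteSpace E]
    (A₁ A₂ : H →L[ℂ] H) (Φ : H →L[ℂ] E) (σ₁ σ₂ γ γs : E →L[ℂ] E)
    (hV : IsAxbVessel A₁ A₂ Φ σ₁ σ₂ γ γs)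
    (u : ℝ → ℝ → E) (ua ub : ℝ → ℝ → E) (x : ℝ → ℝ → H) (xa xb : ℝ → ℝ → H)
    (hx2 : ContDiffOn ℝ 2 (fun p : ℝ × ℝ => x p.1 p.2) {p : ℝ × ℝ | 0 < p.1})
    (hua : ∀ a b : ℝ, 0 < a → HasDerivAt (fun t => u t b) (ua a b) a)
    (hub : ∀ a b : ℝ, 0 < a → HasDerivAt (fun t => u a t) (ub a b) b)
    (hxa : ∀ a b : ℝ, 0 < a → HasDerivAt (fun t => x t b) (xa a b) a)
    (hxb : ∀ a b : ℝ, 0 < a → HasDerivAt (fun t => x a t) (xb a b) b)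
    (hsys₁ : ∀ a b : ℝ, 0 < a →
      (Complex.I * (a : ℂ)) • xa a b + A₁ (x a b) = adjoint Φ (σ₁ (u a b)))
    (hsys₂ : ∀ a b : ℝ, 0 < a →
      (Complex.I * (a : ℂ)) • xb a b + A₂ (x a b) = adjoint Φ (σ₂ (u a b)))
    (y : ℝ → ℝ → E) (ya yb : ℝ → ℝ → E)
    (hy : ∀ a b : ℝ, y a b = u a b - Complex.I • Φ (x a b))
    (hya : ∀ a b : ℝ, ya a b = ua a b - Complex.I • Φ (xa a b))
    (hyb : ∀ a b : ℝ, yb a b = ub a b - Complex.I • Φ (xb a b)) :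
    ∀ a b : ℝ, 0 < a →
      adjoint Φ ((a : ℂ) • σ₂ (ua a b) - (a : ℂ) • σ₁ (ub a b)
        + Complex.I • γ (u a b)) = 0 ∧
      adjoint Φ ((a : ℂ) • σ₂ (ya a b) - (a : ℂ) • σ₁ (yb a b)
        + Complex.I • γs (y a b)) = 0 := by
  intro a b ha
  obtain ⟨w, hw1, hw2⟩ := mixed_partials x xa xb hx2 hxa hxb a b ha
  -- differentiate the system
  have e1 : (Complex.I * (a : ℂ)) • w + A₁ (xb a b) = adjoint Φ (σ₁ (ub a b)) := by
    have h1 : HasDerivAt (fun t => (Complex.I * (a : ℂ)) • xa a t + A₁ (x a t))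
        ((Complex.I * (a : ℂ)) • w + A₁ (xb a b)) b :=
      (hw1.const_smul (Complex.I * (a : ℂ))).add
        ((A₁.restrictScalars ℝ).hasFDerivAt.comp_hasDerivAt b (hxb a b ha))
    have h2 : HasDerivAt (fun t => adjoint Φ (σ₁ (u a t))) (adjoint Φ (σ₁ (ub a b))) b :=
      (((adjoint Φ) ∘L σ₁).restrictScalars ℝ).hasFDerivAt.comp_hasDerivAt b (hub a b ha)
    have h3 : (fun t => (Complex.I * (a : ℂ)) • xa a t + A₁ (x a t)) =
        fun t => adjoint Φ (σ₁ (u a t)) := funext fun t => hsys₁ a t ha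
    rw [h3] at h1
    exact h1.unique h2
  have e2 : (Complex.I * (a : ℂ)) • w + Complex.I • xb a b + A₂ (xa a b)
      = adjoint Φ (σ₂ (ua a b)) := by
    have h0 : HasDerivAt (fun t : ℝ => Complex.I * (t : ℂ)) Complex.I a := by
      simpa using (Complex.ofRealCLM.hasDerivAt (x := a)).const_mul Complex.I
    have h1 : HasDerivAt (fun t : ℝ => (Complex.I * (t : ℂ)) • xb t b + A₂ (x t b))
        ((Complex.I * (a : ℂ)) • w + Complex.I • xb a b + A₂ (xa a b)) a :=
      (h0.smul hw2).add
        ((A₂.restrictScalars ℝ).hasFDerivAt.comp_hasDerivAt a (hxa a b ha))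
    have h2 : HasDerivAt (fun t => adjoint Φ (σ₂ (u t b))) (adjoint Φ (σ₂ (ua a b))) a :=
      (((adjoint Φ) ∘L σ₂).restrictScalars ℝ).hasFDerivAt.comp_hasDerivAt a (hua a b ha)
    have h3 : (fun t : ℝ => (Complex.I * (t : ℂ)) • xb t b + A₂ (x t b)) =ᶠ[nhds a]
        fun t => adjoint Φ (σ₂ (u t b)) := by
      filter_upwards [lt_mem_nhds ha] with t ht using hsys₂ t b ht
    exact h1.unique (h2.congr_of_eventuallyEq h3)
  have s1 := hsys₁ a b ha
  have s2 := hsys₂ a b ha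
  -- operator identities, pointwise
  have c := congrArg (fun T : H →L[ℂ] H => T (x a b)) hV.comm
  have hin := congrArg (fun T : H →L[ℂ] E => adjoint T (u a b)) hV.input
  have hsec := congrArg (fun T : E →L[ℂ] E => adjoint Φ (T (u a b))) hV.second
  have hout := congrArg (fun T : H →L[ℂ] E => T (x a b)) hV.output
  have hlink := congrArg (fun T : E →L[ℂ] E => T (u a b)) hV.linkage
  simp only [map_sub, adjoint_comp, adjoint_adjoint, hV.σ₁_sa, hV.σ₂_sa, sub_apply, smul_apply,
    comp_apply, map_smul] at c hin hsec hout hlink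
  have t1 := congrArg A₂ s1
  have t2 := congrArg A₁ s2
  simp only [map_add, map_smul] at t1 t2
  have hI : Complex.I * Complex.I = -1 := Complex.I_mul_I
  have first : adjoint Φ ((a : ℂ) • σ₂ (ua a b) - (a : ℂ) • σ₁ (ub a b)
        + Complex.I • γ (u a b)) = 0 := by
    simp only [map_add, map_sub, map_smul]
    rw [← e1, ← e2]
    linear_combination (norm := (match_scalars <;> (ring_nf; try simp only [Complex.I_sq]; try ring_nf)))
      s2 - Complex.I • t1 + Complex.I • t2 + Complex.I • hsec - Complex.I • hin - Complex.I • c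
  refine ⟨first, ?_⟩
  have key : (a : ℂ) • σ₂ (ya a b) - (a : ℂ) • σ₁ (yb a b) + Complex.I • γs (y a b)
      = (a : ℂ) • σ₂ (ua a b) - (a : ℂ) • σ₁ (ub a b) + Complex.I • γ (u a b) := by
    have r1 := congrArg (fun v => σ₂ (Φ v)) s1
    have r2 := congrArg (fun v => σ₁ (Φ v)) s2
    simp only [map_add, map_smul] at r1 r2
    rw [hy, hya, hyb]
    simp only [map_sub, map_smul]
    linear_combination (norm := (match_scalars <;> (ring_nf; try simp only [Complex.I_sq]; try ring_nf)))
      r2 - r1 - hout + Complex.I • hlink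
  rw [key, first]
end

section
/- Let 𝔤 be a finite-dimensional real Lie algebra and let (ℋ, ℰ, ρ, Φ, σ, γ, γ_*) be a 𝔤-operator vessel. Then for all X, Y ∈ 𝔤: Φ*γ(X,Y) = ρ(Y)Φ*σ(X) − ρ(X)Φ*σ(Y) + i·Φ*σ([X,Y]). -/
open ContinuousLinearMap

/-- A `𝔤`-operator vessel: Hilbert spaces `ℋ`, `ℰ`, a bounded operator `Φ : ℋ → ℰ`,
real-linear maps `ρ : 𝔤 → L(ℋ)` and `σ : 𝔤 → L(ℰ)`, and real-bilinear alternating maps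
`γ, γ_* : 𝔤 × 𝔤 → L(ℰ)` satisfying the seven vessel conditions. -/
structure IsVessel {g : Type*} [LieRing g] [LieAlgebra ℝ g]
    {H : Type*} [NormedAddCommGroup H] [InnerProductSpace ℂ H] [CompleteSpace H]
    {E : Type*} [NormedAddCommGroup E] [InnerProductSpace ℂ E] [CompleteSpace E]
    (ρ : g → H →L[ℂ] H) (Φ : H →L[ℂ] E) (σ : g → E →L[ℂ] E)
    (γ γs : g → g → E →L[ℂ] E) : Prop where
  ρ_add : ∀ X Y, ρ (X + Y) = ρ X + ρ Y
  ρ_smul : ∀ (r : ℝ) (X : g), ρ (r • X) = (r : ℂ) • ρ X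
  σ_add : ∀ X Y, σ (X + Y) = σ X + σ Y
  σ_smul : ∀ (r : ℝ) (X : g), σ (r • X) = (r : ℂ) • σ X
  γ_addl : ∀ X Y Z, γ (X + Y) Z = γ X Z + γ Y Z
  γ_addr : ∀ X Y Z, γ X (Y + Z) = γ X Y + γ X Z
  γ_smull : ∀ (r : ℝ) (X Y : g), γ (r • X) Y = (r : ℂ) • γ X Y
  γ_smulr : ∀ (r : ℝ) (X Y : g), γ X (r • Y) = (r : ℂ) • γ X Y
  γ_alt : ∀ X, γ X X = 0
  γs_addl : ∀ X Y Z, γs (X + Y) Z = γs X Z + γs Y Z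
  γs_addr : ∀ X Y Z, γs X (Y + Z) = γs X Y + γs X Z
  γs_smull : ∀ (r : ℝ) (X Y : g), γs (r • X) Y = (r : ℂ) • γs X Y
  γs_smulr : ∀ (r : ℝ) (X Y : g), γs X (r • Y) = (r : ℂ) • γs X Y
  γs_alt : ∀ X, γs X X = 0
  comm : ∀ X Y, ρ X ∘L ρ Y - ρ Y ∘L ρ X = Complex.I • ρ ⁅X, Y⁆
  σ_sa : ∀ X, adjoint (σ X) = σ X
  second : ∀ X Y, γ X Y - adjoint (γ X Y) = Complex.I • σ ⁅X, Y⁆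
  second_s : ∀ X Y, γs X Y - adjoint (γs X Y) = Complex.I • σ ⁅X, Y⁆
  colligation : ∀ X, ρ X - adjoint (ρ X) = Complex.I • (adjoint Φ ∘L σ X ∘L Φ)
  input : ∀ X Y, σ X ∘L Φ ∘L adjoint (ρ Y) - σ Y ∘L Φ ∘L adjoint (ρ X) = γ X Y ∘L Φ
  output : ∀ X Y, σ X ∘L Φ ∘L ρ Y - σ Y ∘L Φ ∘L ρ X = γs X Y ∘L Φ
  linkage : ∀ X Y, γs X Y - γ X Y = Complex.I •
      (σ X ∘L Φ ∘L adjoint Φ ∘L σ Y - σ Y ∘L Φ ∘L adjoint Φ ∘L σ X)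

/-- In any `𝔤`-operator vessel,
`Φ*γ(X,Y) = ρ(Y)Φ*σ(X) − ρ(X)Φ*σ(Y) + i Φ*σ([X,Y])` for all `X, Y ∈ 𝔤`. -/
theorem stmt_11 {g : Type*} [LieRing g] [LieAlgebra ℝ g] [FiniteDimensional ℝ g]
    {H : Type*} [NormedAddCommGroup H] [InnerProductSpace ℂ H] [CompleteSpace H]
    {E : Type*} [NormedAddCommGroup E] [InnerProductSpace ℂ E] [CompleteSpace E]
    (ρ : g → H →L[ℂ] H) (Φ : H →L[ℂ] E) (σ : g → E →L[ℂ] E)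
    (γ γs : g → g → E →L[ℂ] E)
    (hV : IsVessel ρ Φ σ γ γs) :
    ∀ X Y : g, adjoint Φ ∘L γ X Y =
      ρ Y ∘L adjoint Φ ∘L σ X - ρ X ∘L adjoint Φ ∘L σ Y
        + Complex.I • (adjoint Φ ∘L σ ⁅X, Y⁆) := by
  intro X Y
  have h := congrArg adjoint (hV.input X Y)
  simp only [map_sub, adjoint_comp, adjoint_adjoint, hV.σ_sa] at h
  have h2 : γ X Y = adjoint (γ X Y) + Complex.I • σ ⁅X, Y⁆ := by
    rw [← hV.second X Y]; abel
  rw [h2, comp_add, ← h, comp_smul]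
  rfl
end

section
/- Let 𝔤 be a Lie algebra over ℂ and let M be a module over 𝔤 (a ℂ-vector space with a Lie module action of 𝔤). Assume there exists X ∈ 𝔤 such that the adjoint map ad_X : 𝔤 → 𝔤 is nilpotent and the action map m ↦ X • m is bijective on M. Then: (a) the only m ∈ M satisfying Y • m = 0 for all Y ∈ 𝔤 is m = 0; and (b) for every ℂ-linear map f : 𝔤 → M satisfying the cocycle identity Y • f(Z) − Z • f(Y) − f([Y,Z]) = 0 for all Y, Z ∈ 𝔤, there exists m ∈ M such that f(Y) = Y • m for all Y ∈ 𝔤. In other words, the zeroth and first Lie algebra cohomology groups of 𝔤 with coefficients in M vanish: H⁰(𝔤, M) = H¹(𝔤, M) = 0. -/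
/-- If a complex Lie algebra `𝔤` has an ad-nilpotent element `X` acting
bijectively on a `𝔤`-module `M`, then `H⁰(𝔤, M) = H¹(𝔤, M) = 0`: the only invariant
element of `M` is `0`, and every 1-cocycle `f : 𝔤 → M` is a 1-coboundary. -/
theorem stmt_12 {g : Type*} [LieRing g] [LieAlgebra ℂ g]
    {M : Type*} [AddCommGroup M] [Module ℂ M] [LieRingModule g M] [LieModule ℂ g M]
    (X : g) (hnil : IsNilpotent (LieAlgebra.ad ℂ g X))
    (hbij : Function.Bijective (fun m : M => ⁅X, m⁆)) :
    (∀ m : M, (∀ Y : g, ⁅Y, m⁆ = 0) → m = 0) ∧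
    (∀ f : g →ₗ[ℂ] M, (∀ Y Z : g, ⁅Y, f Z⁆ - ⁅Z, f Y⁆ - f ⁅Y, Z⁆ = 0) →
      ∃ m : M, ∀ Y : g, f Y = ⁅Y, m⁆) := by
  have hinj : ∀ m : M, ⁅X, m⁆ = 0 → m = 0 := fun m hm =>
    hbij.1 (by simpa using hm)
  refine ⟨fun m hm => hinj m (hm X), fun f hf => ?_⟩
  obtain ⟨m, hm⟩ := hbij.2 (f X)
  have hm' : ⁅X, m⁆ = f X := hm
  obtain ⟨n, hn⟩ := hnil
  have key : ∀ k : ℕ, ∀ Y : g, ((LieAlgebra.ad ℂ g X) ^ k) Y = 0 → f Y = ⁅Y, m⁆ := by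
    intro k
    induction k with
    | zero =>
      intro Y hY
      have hY' : Y = 0 := by simpa using hY
      simp [hY']
    | succ k ih =>
      intro Y hY
      rw [pow_succ, Module.End.mul_apply, LieAlgebra.ad_apply] at hY
      have h1 := ih _ hY
      have h2 := hf X Y
      rw [h1, ← hm', lie_lie] at h2
      rw [← sub_eq_zero]
      apply hinj
      rw [lie_sub, ← h2]
      abel
  exact ⟨m, fun Y => key n Y (by rw [hn]; rfl)⟩
end

section
/- Assume the ax+b vessel conditions for data (ℋ, ℰ, A₁, A₂, Φ, σ₁, σ₂, γ, γ_*). Set τ = (γ + γ*)/2 and τ_* = (γ_* + (γ_*)*)/2 (the real parts of γ and γ_*). Let Ω ⊆ ℂ be open, assume that for every z ∈ Ω the operator A₂ − 2πz·I is invertible, and let u : Ω → ℰ be a differentiable function satisfying z·σ₂·u′(z) − 2πi·z·σ₁·u(z) + i·τ·u(z) = 0 for all z ∈ Ω. Define y : Ω → ℰ by y(z) = u(z) − i·Φ(A₂ − 2πz·I)⁻¹Φ*σ₂·u(z), i.e. y(z) = S(z)u(z) where S(z) = I_ℰ − i·Φ(A₂ − 2πz·I)⁻¹Φ*σ₂.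 Then y is differentiable on Ω and satisfies z·σ₂·y′(z) − 2πi·z·σ₁·y(z) + i·τ_*·y(z) = 0 for all z ∈ Ω. -/
open ContinuousLinearMap

/-- Multiplication by the characteristic function
`S(z) = I − iΦ(A₂ − 2πz)⁻¹Φ*σ₂` of an ax+b vessel maps solutions of the complexified input
compatibility ODE to solutions of the complexified output compatibility ODE. -/
theorem stmt_14 {H : Type*} [NormedAddCommGroup H] [InnerProductSpace ℂ H] [CompleteSpace H]
    {E : Type*} [NormedAddCommGroup E] [InnerProductSpace ℂ E] [CompleteSpace E]
    (A₁ A₂ : H →L[ℂ] H) (Φ : H →L[ℂ] E) (σ₁ σ₂ γ γs : E →L[ℂ] E)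
    (hV : IsAxbVessel A₁ A₂ Φ σ₁ σ₂ γ γs)
    (τ τs : E →L[ℂ] E)
    (hτ : τ = (2⁻¹ : ℂ) • (γ + adjoint γ))
    (hτs : τs = (2⁻¹ : ℂ) • (γs + adjoint γs))
    (Ω : Set ℂ) (hΩ : IsOpen Ω)
    (hinv : ∀ z ∈ Ω, IsUnit (A₂ - (2 * (Real.pi : ℂ) * z) • (1 : H →L[ℂ] H)))
    (u : ℂ → E) (u' : ℂ → E)
    (hu : ∀ z ∈ Ω, HasDerivAt u (u' z) z)
    (hode : ∀ z ∈ Ω, z • σ₂ (u' z) - (2 * (Real.pi : ℂ) * Complex.I * z) • σ₁ (u z)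
      + Complex.I • τ (u z) = 0)
    (y : ℂ → E)
    (hy : ∀ z ∈ Ω, y z = u z - Complex.I •
      Φ (Ring.inverse (A₂ - (2 * (Real.pi : ℂ) * z) • (1 : H →L[ℂ] H))
        (adjoint Φ (σ₂ (u z))))) :
    ∃ y' : ℂ → E, ∀ z ∈ Ω, HasDerivAt y (y' z) z ∧
      z • σ₂ (y' z) - (2 * (Real.pi : ℂ) * Complex.I * z) • σ₁ (y z)
        + Complex.I • τs (y z) = 0 := by
  have hτ' : ∀ x, τ x = γ x - (Complex.I / 2) • σ₂ x := by
    intro x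
    have h := congrArg (fun T : E →L[ℂ] E => T x) hV.second
    simp only [sub_apply, smul_apply] at h
    rw [hτ]
    simp only [add_apply, smul_apply]
    linear_combination (norm := module) (-(2⁻¹ : ℂ)) • h
  have hτs' : ∀ x, τs x = γs x - (Complex.I / 2) • σ₂ x := by
    intro x
    have h := congrArg (fun T : E →L[ℂ] E => T x) hV.second_s
    simp only [sub_apply, smul_apply] at h
    rw [hτs]
    simp only [add_apply, smul_apply]
    linear_combination (norm := module) (-(2⁻¹ : ℂ)) • h
  have hin : ∀ x, A₂ (adjoint Φ (σ₁ x)) - A₁ (adjoint Φ (σ₂ x))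
      = adjoint Φ (γ x) - Complex.I • adjoint Φ (σ₂ x) := by
    intro x
    have h := congrArg (fun T => (adjoint T) x) hV.input
    simp only [map_sub, adjoint_comp, adjoint_adjoint, hV.σ₁_sa, hV.σ₂_sa, sub_apply,
      comp_apply] at h
    have h2 := congrArg (fun T : E →L[ℂ] E => adjoint Φ (T x)) hV.second
    simp only [sub_apply, smul_apply, map_sub, map_smul] at h2
    linear_combination (norm := module) h - h2
  have hR : ∀ z ∈ Ω, HasDerivAt
      (fun z : ℂ => Ring.inverse (A₂ - (2 * (Real.pi : ℂ) * z) • (1 : H →L[ℂ] H)))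
      ((2 * (Real.pi : ℂ)) • (Ring.inverse (A₂ - (2 * (Real.pi : ℂ) * z) • (1 : H →L[ℂ] H)) *
        Ring.inverse (A₂ - (2 * (Real.pi : ℂ) * z) • (1 : H →L[ℂ] H)))) z := by
    intro z hz
    obtain ⟨M, hM⟩ := hinv z hz
    have h1 : HasDerivAt (fun z : ℂ => A₂ - (2 * (Real.pi : ℂ) * z) • (1 : H →L[ℂ] H))
        (-((2 * (Real.pi : ℂ)) • (1 : H →L[ℂ] H))) z := by
      have := (((hasDerivAt_id z).const_mul (2 * (Real.pi : ℂ))).smul_const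
        (1 : H →L[ℂ] H)).const_sub A₂
      simpa using this
    have h2 := hasFDerivAt_ringInverse (𝕜 := ℂ) M
    rw [hM] at h2
    have h3 := h2.comp_hasDerivAt z h1
    rw [← hM, Ring.inverse_unit]
    refine h3.congr_deriv ?_
    simp
  refine ⟨fun z => u' z - Complex.I • Φ ((2 * (Real.pi : ℂ)) •
      Ring.inverse (A₂ - (2 * (Real.pi : ℂ) * z) • (1 : H →L[ℂ] H))
        (Ring.inverse (A₂ - (2 * (Real.pi : ℂ) * z) • (1 : H →L[ℂ] H)) (adjoint Φ (σ₂ (u z))))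
      + Ring.inverse (A₂ - (2 * (Real.pi : ℂ) * z) • (1 : H →L[ℂ] H))
        (adjoint Φ (σ₂ (u' z)))), fun z hz => ⟨?_, ?_⟩⟩
  · have h1 : HasDerivAt (fun z => adjoint Φ (σ₂ (u z))) (adjoint Φ (σ₂ (u' z))) z :=
      (adjoint Φ).hasFDerivAt.comp_hasDerivAt z (σ₂.hasFDerivAt.comp_hasDerivAt z (hu z hz))
    have h2 := (hR z hz).clm_apply h1
    have h3 := (hu z hz).sub ((Φ.hasFDerivAt.comp_hasDerivAt z h2).const_smul Complex.I)
    refine (h3.congr_of_eventuallyEq ?_).congr_deriv ?_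
    · filter_upwards [hΩ.mem_nhds hz] with w hw
      rw [hy w hw]
      rfl
    · simp
  · have hu0 := hode z hz
    beta_reduce
    rw [hy z hz]
    have hU := hinv z hz
    have e1 : ∀ x, A₂ (Ring.inverse (A₂ - (2 * (Real.pi : ℂ) * z) • (1 : H →L[ℂ] H)) x) =
        x + (2 * (Real.pi : ℂ) * z) •
          Ring.inverse (A₂ - (2 * (Real.pi : ℂ) * z) • (1 : H →L[ℂ] H)) x := by
      intro x
      have h := congrArg (fun T : H →L[ℂ] H => T x) (Ring.mul_inverse_cancel _ hU)
      change A₂ (Ring.inverse (A₂ - (2 * (Real.pi : ℂ) * z) • (1 : H →L[ℂ] H)) x) -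
        (2 * (Real.pi : ℂ) * z) •
          Ring.inverse (A₂ - (2 * (Real.pi : ℂ) * z) • (1 : H →L[ℂ] H)) x = x at h
      linear_combination (norm := module) h
    have e2 : ∀ x, A₂ x = (2 * (Real.pi : ℂ) * z) • x → x = 0 := by
      intro x hx
      have h := congrArg (fun T : H →L[ℂ] H => T x) (Ring.inverse_mul_cancel _ hU)
      change Ring.inverse (A₂ - (2 * (Real.pi : ℂ) * z) • (1 : H →L[ℂ] H))
        (A₂ x - (2 * (Real.pi : ℂ) * z) • x) = x at h
      rw [hx, sub_self, map_zero] at h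
      exact h.symm
    generalize Ring.inverse (A₂ - (2 * (Real.pi : ℂ) * z) • (1 : H →L[ℂ] H)) = R at e1 ⊢
    generalize hw : 2 * (Real.pi : ℂ) * z = w at e1 e2
    set a := u z
    set v := R (adjoint Φ (σ₂ a)) with hv
    -- the bracket vanishes
    have key : adjoint Φ (σ₁ a) - (Complex.I * w) • R v + w • R (adjoint Φ (σ₁ a))
        - R (adjoint Φ (τ a)) - A₁ v - (Complex.I / 2) • v = 0 := by
      apply e2
      have hc := congrArg (fun T : H →L[ℂ] H => T v) hV.comm
      simp only [sub_apply, smul_apply, comp_apply] at hc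
      have hav : A₂ v = adjoint Φ (σ₂ a) + w • v := e1 _
      have hA1 := congrArg A₁ hav
      simp only [map_add, map_smul] at hA1
      have ht := congrArg (adjoint Φ) (hτ' a)
      simp only [map_sub, map_smul] at ht
      simp only [map_sub, map_add, map_smul, e1]
      rw [hav] at hc ⊢
      simp only [map_add, map_smul] at hc
      linear_combination (norm := module) hc + hin a - ht
    have hk := congrArg (fun x => σ₂ (Φ x)) key
    simp only [map_sub, map_add, map_smul, map_zero] at hk
    have ho := congrArg (fun T : H →L[ℂ] E => T v) hV.output
    simp only [sub_apply, comp_apply] at ho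
    have hav : A₂ v = adjoint Φ (σ₂ a) + w • v := e1 _
    rw [hav] at ho
    simp only [map_add, map_smul] at ho
    have hl := congrArg (fun T : E →L[ℂ] E => T a) hV.linkage
    simp only [sub_apply, comp_apply, smul_apply] at hl
    have hu1 := congrArg (fun x => σ₂ (Φ (R (adjoint Φ x)))) hu0
    simp only [map_sub, map_add, map_smul, map_zero] at hu1
    have ht := hτ' a
    simp only [map_sub, map_add, map_smul, hτs']
    subst hw
    have hI : Complex.I * Complex.I = -1 := Complex.I_mul_I
    linear_combination (norm := skip) hu0 - Complex.I • hu1 + hk - ho + Complex.I • hl - Complex.I • ht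
    match_scalars <;> first
      | ring1
      | (ring_nf
         simp only [Complex.I_sq, Complex.I_pow_three]
         ring1)
end
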